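/- Suppose θ : ℝⁿ → ℝ and each component gᵢ : ℝⁿ → ℝ are differentiable and convex, X ⊆ ℝⁿ is nonempty closed convex, and x* ∈ X satisfies the KKT conditions with a multiplier η* ∈ ℝᵐ: η* ≥ 0, g(x*) ≤ 0 componentwise, ⟨η*, g(x*)⟩ = 0, and ⟨∇θ(x*) + Σᵢ ηᵢ* ∇gᵢ(x*), x − x*⟩ ≥ 0 for all x ∈ X. Then for any α, β > 0, the tuple (x*, z*, λ*, μ*) with z* = 0 and λ* = μ* = η* is a saddle point of the proximal-perturbed Lagrangian L subject to X. -/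

import Mathlib

open scoped InnerProductSpace
open Filter Topology

/-- The proximal-perturbed Lagrangian (P-Lagrangian)
`L(x, z, λ, μ) = θ(x) + ⟨λ, g(x) − z⟩ + ⟨μ, z⟩ + (α/2)‖z‖² − (β/2)‖λ − μ‖²`. -/
noncomputable def PLag {n m : ℕ} (θ : EuclideanSpace ℝ (Fin n) → ℝ)
    (g : EuclideanSpace ℝ (Fin n) → EuclideanSpace ℝ (Fin m)) (α β : ℝ)
    (x : EuclideanSpace ℝ (Fin n)) (z lam mu : EuclideanSpace ℝ (Fin m)) : ℝ :=
  θ x + ⟪lam, g x - z⟫_ℝ + ⟪mu, z⟫_ℝ + (α / 2) * ‖z‖ ^ 2 - (β / 2) * ‖lam - mu‖ ^ 2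

/-- `(x*, z*, λ*, μ*)` is a saddle point of the P-Lagrangian subject to `X`:
`x* ∈ X`, `λ* ∈ ℝᵐ₊`, and
`L(x*, z*, λ, μ) ≤ L(x*, z*, λ*, μ*) ≤ L(x, z, λ*, μ*)` for all
`(x, z, λ, μ) ∈ X × ℝᵐ × ℝᵐ₊ × ℝᵐ`. -/
def IsSaddlePt {n m : ℕ} (θ : EuclideanSpace ℝ (Fin n) → ℝ)
    (g : EuclideanSpace ℝ (Fin n) → EuclideanSpace ℝ (Fin m)) (α β : ℝ)
    (X : Set (EuclideanSpace ℝ (Fin n)))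
    (xs : EuclideanSpace ℝ (Fin n)) (zs ls ms : EuclideanSpace ℝ (Fin m)) : Prop :=
  xs ∈ X ∧ (∀ i, 0 ≤ ls i) ∧
    (∀ lam mu : EuclideanSpace ℝ (Fin m), (∀ i, 0 ≤ lam i) →
      PLag θ g α β xs zs lam mu ≤ PLag θ g α β xs zs ls ms) ∧
    (∀ x ∈ X, ∀ z : EuclideanSpace ℝ (Fin m),
      PLag θ g α β xs zs ls ms ≤ PLag θ g α β x z ls ms)

/-!
At `z = 0` and at `λ = μ` the P-Lagrangian differs from the ordinary Lagrangian `ℓ` only by a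
penalty of favourable sign: writing `ℓ(x, λ) = θ(x) + ⟨λ, g(x)⟩`, we have
`L(x*, 0, λ, μ) = ℓ(x*, λ) - (β/2)‖λ - μ‖²` and `L(x, z, η, η) = ℓ(x, η) + (α/2)‖z‖²`. So every
saddle point `(x*, η)` of `ℓ` lifts to the saddle point `(x*, 0, η, η)` of `L`. That a KKT point is
a saddle point of `ℓ` is classical: feasibility and complementary slackness make `η` maximize
`ℓ(x*, ·)`, and by convexity the variational inequality makes `x*` minimize `ℓ(·, η)`.
-/

section Lagrangian

variable {E H : Type*} [NormedAddCommGroup H] [InnerProductSpace ℝ H]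

/-- The ordinary Lagrangian `ℓ(x, λ) = θ(x) + ⟨λ, g(x)⟩` of the problem of minimizing `θ` subject to
`g ≤ 0`, with constraints valued in an arbitrary inner product space. -/
noncomputable def lagrangian (θ : E → ℝ) (g : E → H) (x : E) (lam : H) : ℝ :=
  θ x + ⟪lam, g x⟫_ℝ

/-- The P-Lagrangian with constraints valued in an arbitrary inner product space. The primal
variables `p = (x, z)` and the dual variables `q = (λ, μ)` are paired, so that `IsSaddlePointOn`
applies. -/
noncomputable def proxPerturbedLagrangian (θ : E → ℝ) (g : E → H) (α β : ℝ)
    (p : E × H) (q : H × H) : ℝ :=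
  θ p.1 + ⟪q.1, g p.1 - p.2⟫_ℝ + ⟪q.2, p.2⟫_ℝ + (α / 2) * ‖p.2‖ ^ 2 - (β / 2) * ‖q.1 - q.2‖ ^ 2

theorem proxPerturbedLagrangian_zero_right (θ : E → ℝ) (g : E → H) (α β : ℝ) (x : E)
    (lam mu : H) :
    proxPerturbedLagrangian θ g α β (x, 0) (lam, mu) =
      lagrangian θ g x lam - (β / 2) * ‖lam - mu‖ ^ 2 := by
  simp [proxPerturbedLagrangian, lagrangian]

theorem proxPerturbedLagrangian_diag (θ : E → ℝ) (g : E → H) (α β : ℝ) (x : E) (z lam : H) :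
    proxPerturbedLagrangian θ g α β (x, z) (lam, lam) =
      lagrangian θ g x lam + (α / 2) * ‖z‖ ^ 2 := by
  simp only [proxPerturbedLagrangian, lagrangian, inner_sub_right, sub_self, norm_zero]
  ring

theorem isSaddlePointOn_proxPerturbedLagrangian {θ : E → ℝ} {g : E → H} {X : Set E} {Λ : Set H}
    {xs : E} {eta : H} (h : IsSaddlePointOn X Λ (lagrangian θ g) xs eta)
    {α β : ℝ} (hα : 0 ≤ α) (hβ : 0 ≤ β) :
    IsSaddlePointOn (X ×ˢ Set.univ) (Λ ×ˢ Set.univ) (proxPerturbedLagrangian θ g α β)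
      (xs, 0) (eta, eta) := by
  rintro ⟨x, z⟩ ⟨hx, -⟩ ⟨lam, mu⟩ ⟨hlam, -⟩
  calc proxPerturbedLagrangian θ g α β (xs, 0) (lam, mu)
      = lagrangian θ g xs lam - (β / 2) * ‖lam - mu‖ ^ 2 :=
        proxPerturbedLagrangian_zero_right ..
    _ ≤ lagrangian θ g xs lam := sub_le_self _ (by positivity)
    _ ≤ lagrangian θ g x eta := h x hx lam hlam
    _ ≤ lagrangian θ g x eta + (α / 2) * ‖z‖ ^ 2 := le_add_of_nonneg_right (by positivity)
    _ = proxPerturbedLagrangian θ g α β (x, z) (eta, eta) :=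
        (proxPerturbedLagrangian_diag ..).symm

end Lagrangian

theorem isSaddlePt_iff_isSaddlePointOn {n m : ℕ} {θ : EuclideanSpace ℝ (Fin n) → ℝ}
    {g : EuclideanSpace ℝ (Fin n) → EuclideanSpace ℝ (Fin m)} {α β : ℝ}
    {X : Set (EuclideanSpace ℝ (Fin n))} {xs : EuclideanSpace ℝ (Fin n)}
    {zs ls ms : EuclideanSpace ℝ (Fin m)} :
    IsSaddlePt θ g α β X xs zs ls ms ↔
      xs ∈ X ∧ (∀ i, 0 ≤ ls i) ∧
        IsSaddlePointOn (X ×ˢ Set.univ) ({lam | ∀ i, 0 ≤ lam i} ×ˢ Set.univ)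
          (proxPerturbedLagrangian θ g α β) (xs, zs) (ls, ms) := by
  refine and_congr_right fun hxs => and_congr_right fun hls => ⟨?_, fun h => ⟨?_, ?_⟩⟩
  · rintro ⟨hmax, hmin⟩ ⟨x, z⟩ ⟨hx, -⟩ ⟨lam, mu⟩ ⟨hlam, -⟩
    exact (hmax lam mu hlam).trans (hmin x hx z)
  · exact fun lam mu hlam => h (xs, zs) ⟨hxs, trivial⟩ (lam, mu) ⟨hlam, trivial⟩
  · exact fun x hx z => h (x, z) ⟨hx, trivial⟩ (ls, ms) ⟨hls, trivial⟩

section KKT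

theorem lagrangian_eq_add_sum {E ι : Type*} [Fintype ι] (θ : E → ℝ)
    (g : E → EuclideanSpace ℝ ι) (x : E) (lam : EuclideanSpace ℝ ι) :
    lagrangian θ g x lam = θ x + ∑ i, lam i * g x i := by
  simp [lagrangian, PiLp.inner_apply, mul_comm]

theorem isMaxOn_lagrangian_of_complementary {E ι : Type*} [Fintype ι] {θ : E → ℝ}
    {g : E → EuclideanSpace ℝ ι} {xs : E} {eta : EuclideanSpace ℝ ι}
    (hfeas : ∀ i, g xs i ≤ 0) (hcomp : ⟪eta, g xs⟫_ℝ = 0) :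
    IsMaxOn (lagrangian θ g xs) {lam | ∀ i, 0 ≤ lam i} eta := by
  intro lam hlam
  calc lagrangian θ g xs lam
      = θ xs + ∑ i, lam i * g xs i := lagrangian_eq_add_sum ..
    _ ≤ θ xs := add_le_of_nonpos_right <|
        Finset.sum_nonpos fun i _ => mul_nonpos_of_nonneg_of_nonpos (hlam i) (hfeas i)
    _ = lagrangian θ g xs eta := by rw [lagrangian, hcomp, add_zero]

variable {E : Type*} [NormedAddCommGroup E] [NormedSpace ℝ E] {s : Set E} {x y : E}

theorem add_fderiv_sub_le_of_convexOn {f : E → ℝ} {f' : E →L[ℝ] ℝ} (hf : ConvexOn ℝ s f)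
    (hf' : HasFDerivWithinAt f f' s x) (hx : x ∈ s) (hy : y ∈ s) :
    f x + f' (y - x) ≤ f y := by
  let line : ℝ →ᵃ[ℝ] E := AffineMap.lineMap x y
  have line_zero : line 0 = x := AffineMap.lineMap_apply_zero x y
  have line_one : line 1 = y := AffineMap.lineMap_apply_one x y
  have hconv : ConvexOn ℝ (line ⁻¹' s) (f ∘ line) := hf.comp_affineMap line
  have hderiv : HasDerivWithinAt (f ∘ line) (f' (y - x)) (line ⁻¹' s) 0 :=
    hf'.comp_hasDerivWithinAt_of_eq 0 AffineMap.hasDerivWithinAt_lineMap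
      (Set.mapsTo_preimage line s) line_zero.symm
  have hslope : f' (y - x) ≤ slope (f ∘ line) 0 1 :=
    hconv.le_slope_of_hasDerivWithinAt (by simpa [line_zero]) (by simpa [line_one]) one_pos hderiv
  simp only [slope_def_field, Function.comp_apply, line_zero, line_one, sub_zero, div_one] at hslope
  linarith

variable {ι : Type*} [Fintype ι] {θ : E → ℝ} {g : E → EuclideanSpace ℝ ι}
  {θ' : E →L[ℝ] ℝ} {g' : ι → E →L[ℝ] ℝ} {X : Set E} {eta : EuclideanSpace ℝ ι}

theorem lagrangian_add_fderiv_sub_le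
    (hθ : ConvexOn ℝ s θ) (hg : ∀ i, ConvexOn ℝ s (fun x => g x i))
    (hθ' : HasFDerivWithinAt θ θ' s x) (hg' : ∀ i, HasFDerivWithinAt (fun x => g x i) (g' i) s x)
    (heta : ∀ i, 0 ≤ eta i) (hx : x ∈ s) (hy : y ∈ s) :
    lagrangian θ g x eta + (θ' + ∑ i, eta i • g' i) (y - x) ≤ lagrangian θ g y eta := by
  have hobjective : θ x + θ' (y - x) ≤ θ y := add_fderiv_sub_le_of_convexOn hθ hθ' hx hy
  have hconstraint (i : ι) : eta i * (g x i + g' i (y - x)) ≤ eta i * g y i :=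
    mul_le_mul_of_nonneg_left (add_fderiv_sub_le_of_convexOn (hg i) (hg' i) hx hy) (heta i)
  calc lagrangian θ g x eta + (θ' + ∑ i, eta i • g' i) (y - x)
      = (θ x + θ' (y - x)) + ∑ i, eta i * (g x i + g' i (y - x)) := by
        simp only [lagrangian_eq_add_sum, add_apply, sum_apply,
          smul_apply, smul_eq_mul, mul_add, Finset.sum_add_distrib]
        ring
    _ ≤ θ y + ∑ i, eta i * g y i :=
        add_le_add hobjective (Finset.sum_le_sum fun i _ => hconstraint i)
    _ = lagrangian θ g y eta := (lagrangian_eq_add_sum ..).symm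

theorem isMinOn_lagrangian_of_variational_inequality
    (hθ : ConvexOn ℝ s θ) (hg : ∀ i, ConvexOn ℝ s (fun x => g x i))
    (hθ' : HasFDerivWithinAt θ θ' s x) (hg' : ∀ i, HasFDerivWithinAt (fun x => g x i) (g' i) s x)
    (heta : ∀ i, 0 ≤ eta i) (hx : x ∈ s) (hXs : X ⊆ s)
    (hVI : ∀ y ∈ X, 0 ≤ (θ' + ∑ i, eta i • g' i) (y - x)) :
    IsMinOn (fun y => lagrangian θ g y eta) X x := fun y hy =>
  (le_add_of_nonneg_right (hVI y hy)).trans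
    (lagrangian_add_fderiv_sub_le hθ hg hθ' hg' heta hx (hXs hy))

theorem kkt_point_is_saddle_point_general {xs : E}
    (hθ : ConvexOn ℝ s θ) (hg : ∀ i, ConvexOn ℝ s (fun x => g x i))
    (hθ' : HasFDerivWithinAt θ θ' s xs)
    (hg' : ∀ i, HasFDerivWithinAt (fun x => g x i) (g' i) s xs)
    (hxs : xs ∈ s) (hXs : X ⊆ s)
    (heta : ∀ i, 0 ≤ eta i) (hfeas : ∀ i, g xs i ≤ 0) (hcomp : ⟪eta, g xs⟫_ℝ = 0)
    (hVI : ∀ x ∈ X, 0 ≤ (θ' + ∑ i, eta i • g' i) (x - xs))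
    {α β : ℝ} (hα : 0 ≤ α) (hβ : 0 ≤ β) :
    IsSaddlePointOn (X ×ˢ Set.univ) ({lam | ∀ i, 0 ≤ lam i} ×ˢ Set.univ)
      (proxPerturbedLagrangian θ g α β) (xs, 0) (eta, eta) := by
  have hmax : IsMaxOn (lagrangian θ g xs) {lam | ∀ i, 0 ≤ lam i} eta :=
    isMaxOn_lagrangian_of_complementary hfeas hcomp
  have hmin : IsMinOn (fun x => lagrangian θ g x eta) X xs :=
    isMinOn_lagrangian_of_variational_inequality hθ hg hθ' hg' heta hxs hXs hVI
  have hsaddle : IsSaddlePointOn X {lam | ∀ i, 0 ≤ lam i} (lagrangian θ g) xs eta :=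
    fun x hx lam hlam => (hmax hlam).trans (hmin hx)
  exact isSaddlePointOn_proxPerturbedLagrangian hsaddle hα hβ

end KKT

/-- Theorem 2 of the paper. If `θ` and each `gᵢ` are differentiable and
convex, `X` is nonempty closed convex, and `x* ∈ X` satisfies the KKT conditions with
multiplier `η* ≥ 0` (feasibility, complementary slackness, and the variational inequality for
the Lagrangian gradient), then `(x*, 0, η*, η*)` is a saddle point of the P-Lagrangian
subject to `X`, for any `α, β > 0`. -/
theorem kkt_point_is_saddle_point {n m : ℕ}
    (θ : EuclideanSpace ℝ (Fin n) → ℝ)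
    (g : EuclideanSpace ℝ (Fin n) → EuclideanSpace ℝ (Fin m))
    (X : Set (EuclideanSpace ℝ (Fin n)))
    (hXne : X.Nonempty) (hXcl : IsClosed X) (hXcv : Convex ℝ X)
    (hθd : Differentiable ℝ θ) (hθc : ConvexOn ℝ Set.univ θ)
    (hgd : ∀ i, Differentiable ℝ (fun x => g x i))
    (hgc : ∀ i, ConvexOn ℝ Set.univ (fun x => g x i))
    (xs : EuclideanSpace ℝ (Fin n)) (eta : EuclideanSpace ℝ (Fin m))
    (hxs : xs ∈ X)
    (heta : ∀ i, 0 ≤ eta i)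
    (hfeas : ∀ i, g xs i ≤ 0)
    (hcomp : ⟪eta, g xs⟫_ℝ = 0)
    (hVI : ∀ x ∈ X,
      0 ≤ ⟪gradient θ xs + ∑ i, eta i • gradient (fun y => g y i) xs, x - xs⟫_ℝ)
    (α β : ℝ) (hα : 0 < α) (hβ : 0 < β) :
    IsSaddlePt θ g α β X xs 0 eta eta := by
  exact isSaddlePt_iff_isSaddlePointOn.2 ⟨hxs, heta, kkt_point_is_saddle_point_general hθc hgc
    (hθd xs).hasGradientAt.hasFDerivAt.hasFDerivWithinAt
    (fun i => (hgd i xs).hasGradientAt.hasFDerivAt.hasFDerivWithinAt)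
    (Set.mem_univ xs) (Set.subset_univ X) heta hfeas hcomp
    (by simpa [inner_add_left, sum_inner, real_inner_smul_left] using hVI) hα.le hβ.le⟩
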